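/- Let λ > 0 and β ∈ (0,1]. The generalized Appell system is biorthogonal with respect to L²(π_{λ,β}): for all n, m ∈ ℕ₀, ∫_ℝ (Δ^m C_n^{λ,β})(x) dπ_{λ,β}(x) = n! δ_{n,m}, where Δ is the forward difference operator (Δf)(x) = f(x+1) − f(x), Δ^m its m-fold iterate, and δ_{n,m} the Kronecker delta. (The left-hand side is the dual pairing ⟨⟨C_n^{λ,β}, Q_m^{π_{λ,β}}⟩⟩ of the generalized Appell polynomial C_n^{λ,β} with the m-th element Q_m^{π_{λ,β}} = ((e^∇ − 1)^m)^* 1 of the generalized dual Appell system.) -/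

import Mathlib

/-!
The generating function of the polynomials is `e^{x log(1+z)} / E_β(λz)`, and a forward difference
in `x` multiplies it by `z`, because `e^{(x+1) log(1+z)} = (1+z) e^{x log(1+z)}`. The mass of
`π_{λ,β}` at `k` is the `k`-th Taylor coefficient of `z ↦ E_β(λz)` at `-1`, so integrating
`x ↦ e^{x log(1+z)}` replaces it by `E_β(λz)`. Integrating `Δ^m C_n` therefore gives the `n`-th
derivative at `0` of `E_β(λz) z^m / E_β(λz) = z^m`.

The analytic point is that the masses `λᵏ/k! E_β⁽ᵏ⁾(-λ)` are nonnegative. The derivatives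
`n!/Γ(βn+1)` of `E_β` at `0` are the moments of a functional that is positive on the polynomials
nonnegative on `[0, ∞)`: by Euler's limit they are limits of `n!` times scaled rising factorials
of `βn+1`, whose linear factors are absorbed into the moments `(n+k)!` of `tᵏ e^{-t} dt` when
`β ≤ 1`. Finally `E_β⁽ᵏ⁾(x)` is the limit of the values of this functional at `tᵏ` times the even
Taylor sections of `e^{xt}`, which are positive.
-/

open MeasureTheory Finset
open scoped ENNReal NNReal

noncomputable section

/-- The complex Mittag-Leffler function `E_β(z) = ∑ zⁿ / Γ(βn+1)`. -/
def mittagLeffler (β : ℝ) (z : ℂ) : ℂ :=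
  ∑' n : ℕ, z ^ n / (Complex.Gamma ((β * n + 1 : ℝ) : ℂ))

/-- The real Mittag-Leffler function `E_β(x) = ∑ xⁿ / Γ(βn+1)`. -/
def mittagLefflerR (β : ℝ) (x : ℝ) : ℝ :=
  ∑' n : ℕ, x ^ n / Real.Gamma (β * n + 1)

/-- The fractional Poisson measure `π_{λ,β} = ∑_k (λᵏ/k!) E_β⁽ᵏ⁾(-λ) δ_k` on `ℝ`. -/
def fracPoisson (lam β : ℝ) : Measure ℝ :=
  Measure.sum fun k : ℕ =>
    ENNReal.ofReal (lam ^ k / k.factorial * iteratedDeriv k (mittagLefflerR β) (-lam)) •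
      Measure.dirac (k : ℝ)

/-- The Poisson measure with rate `μ` on `ℝ`, `π_μ({k}) = (μᵏ/k!) e^{-μ}`. -/
def poissonMeasureR (μ : ℝ) : Measure ℝ :=
  Measure.sum fun k : ℕ =>
    ENNReal.ofReal (μ ^ k / k.factorial * Real.exp (-μ)) • Measure.dirac (k : ℝ)

/-- The generalized Appell polynomials
`C_n^{λ,β}(x) = dⁿ/dzⁿ [e^{x log(1+z)} / E_β(λz)]` at `z = 0`. -/
def genAppell (lam β : ℝ) (n : ℕ) (x : ℂ) : ℂ :=
  iteratedDeriv n
    (fun z : ℂ => Complex.exp (x * Complex.log (1 + z)) / mittagLeffler β (lam * z)) 0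

/-- The Appell polynomials `A_n^{λ,β}(x) = dⁿ/dzⁿ [e^{zx} / E_β(λ(eᶻ-1))]` at `z = 0`. -/
def appell (lam β : ℝ) (n : ℕ) (x : ℂ) : ℂ :=
  iteratedDeriv n
    (fun z : ℂ => Complex.exp (z * x) / mittagLeffler β (lam * (Complex.exp z - 1))) 0

/-- Stirling numbers of the first kind, via `(log(1+z))^k = k! ∑_{n≥k} s(n,k) zⁿ/n!`. -/
def stirlingFst (n k : ℕ) : ℝ :=
  iteratedDeriv n (fun x : ℝ => (Real.log (1 + x)) ^ k) 0 / k.factorial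

/-- Stirling numbers of the second kind, via `(eᶻ-1)^k = k! ∑_{n≥k} S(n,k) zⁿ/n!`. -/
def stirlingSnd (n k : ℕ) : ℝ :=
  iteratedDeriv n (fun x : ℝ => (Real.exp x - 1) ^ k) 0 / k.factorial

/-- The `n`-th moment of the fractional Poisson measure. -/
def fpMoment (lam β : ℝ) (n : ℕ) : ℝ := ∫ x, x ^ n ∂(fracPoisson lam β)

/-- `M̃_{λ,β}(m) = m! λᵐ / Γ(mβ+1)`. -/
def tildeM (lam β : ℝ) (m : ℕ) : ℝ := m.factorial * lam ^ m / Real.Gamma (m * β + 1)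

/-- The (partial exponential) Bell polynomials `B_{n,k}(x₁, …, x_{n-k+1})`. -/
def bellPoly (n k : ℕ) (x : ℕ → ℂ) : ℂ :=
  ∑ j ∈ (Fintype.piFinset fun _ : Fin (n - k + 1) => Finset.range (n + 1)).filter
      (fun j => (∑ i, j i) = k ∧ (∑ i, (i.1 + 1) * j i) = n),
    (n.factorial : ℂ) / (∏ i, ((j i).factorial : ℂ)) *
      ∏ i, (x (i.1 + 1) / ((i.1 + 1).factorial : ℂ)) ^ j i

section Stieltjes

open Polynomial

/-- The linear functional on real polynomials with prescribed moments, `Xⁿ ↦ μ n`. -/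
def momentFunctional (μ : ℕ → ℝ) : ℝ[X] →ₗ[ℝ] ℝ :=
  Polynomial.lsum fun n => LinearMap.mulRight ℝ (μ n)

/-- Stieltjes positivity of a real sequence: the functional with moments `μ` is nonnegative on the
polynomials that are nonnegative on `[0, ∞)`. By the Riesz–Haviland theorem this says that `μ` is
the moment sequence of a measure on `[0, ∞)`; the functional form spares us that measure. -/
def IsStieltjesPositive (μ : ℕ → ℝ) : Prop :=
  ∀ p : ℝ[X], (∀ t, 0 ≤ t → 0 ≤ p.eval t) → 0 ≤ momentFunctional μ p

variable {μ ν : ℕ → ℝ}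

lemma momentFunctional_apply (μ : ℕ → ℝ) (p : ℝ[X]) :
    momentFunctional μ p = p.sum fun n a => a * μ n := rfl

lemma momentFunctional_monomial (μ : ℕ → ℝ) (n : ℕ) (a : ℝ) :
    momentFunctional μ (monomial n a) = a * μ n :=
  sum_monomial_index a _ (zero_mul _)

lemma momentFunctional_mul_X_pow (μ : ℕ → ℝ) (k : ℕ) (p : ℝ[X]) :
    momentFunctional μ (p * X ^ k) = momentFunctional (fun n => μ (n + k)) p := by
  induction p using Polynomial.induction_on' with
  | add p q hp hq => rw [add_mul, map_add, map_add, hp, hq]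
  | monomial n a => simp only [monomial_mul_X_pow, momentFunctional_monomial]

lemma momentFunctional_comp_C_mul_X (μ : ℕ → ℝ) (r : ℝ) (p : ℝ[X]) :
    momentFunctional μ (p.comp (C r * X)) = momentFunctional (fun n => r ^ n * μ n) p := by
  induction p using Polynomial.induction_on' with
  | add p q hp hq => rw [add_comp, map_add, map_add, hp, hq]
  | monomial n a =>
    rw [monomial_comp, mul_pow, ← C_pow, ← mul_assoc, ← C_mul, C_mul_X_pow_eq_monomial,
      momentFunctional_monomial, momentFunctional_monomial, mul_assoc]

namespace IsStieltjesPositive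

lemma add (hμ : IsStieltjesPositive μ) (hν : IsStieltjesPositive ν) :
    IsStieltjesPositive fun n => μ n + ν n := by
  intro p hp
  have h := add_nonneg (hμ p hp) (hν p hp)
  simpa only [momentFunctional_apply, Polynomial.sum, mul_add, sum_add_distrib] using h

lemma const_mul (hμ : IsStieltjesPositive μ) {c : ℝ} (hc : 0 ≤ c) :
    IsStieltjesPositive fun n => c * μ n := by
  intro p hp
  have h := mul_nonneg hc (hμ p hp)
  simpa only [momentFunctional_apply, Polynomial.sum, mul_sum, mul_left_comm c] using h

lemma shift (hμ : IsStieltjesPositive μ) (k : ℕ) : IsStieltjesPositive fun n => μ (n + k) := by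
  intro p hp
  rw [← momentFunctional_mul_X_pow]
  refine hμ _ fun t ht => ?_
  rw [eval_mul, eval_pow, eval_X]
  exact mul_nonneg (hp t ht) (pow_nonneg ht k)

lemma pow_mul (hμ : IsStieltjesPositive μ) {r : ℝ} (hr : 0 ≤ r) :
    IsStieltjesPositive fun n => r ^ n * μ n := by
  intro p hp
  rw [← momentFunctional_comp_C_mul_X]
  refine hμ _ fun t ht => ?_
  rw [eval_comp, eval_mul, eval_C, eval_X]
  exact hp _ (mul_nonneg hr ht)

lemma of_tendsto {ι : Type*} {l : Filter ι} [l.NeBot] {f : ι → ℕ → ℝ}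
    (hf : ∀ i, IsStieltjesPositive (f i))
    (hlim : ∀ n, Filter.Tendsto (fun i => f i n) l (nhds (μ n))) : IsStieltjesPositive μ := by
  intro p hp
  have h : Filter.Tendsto (fun i => momentFunctional (f i) p) l (nhds (momentFunctional μ p)) := by
    simp only [momentFunctional_apply, Polynomial.sum]
    exact tendsto_finsetSum _ fun n _ => (hlim n).const_mul (p.coeff n)
  exact ge_of_tendsto' h fun i => hf i p hp

end IsStieltjesPositive

lemma sum_range_odd_pow_div_factorial_pos (M : ℕ) (x : ℝ) :
    0 < ∑ j ∈ range (2 * M + 1), x ^ j / (j.factorial : ℝ) := by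
  rcases le_or_gt 0 x with hx | hx
  · rw [sum_range_succ']
    positivity
  · obtain ⟨ξ, -, hξ⟩ := taylor_mean_remainder_lagrange_iteratedDeriv (n := 2 * M) hx.ne'
      Real.contDiff_exp.contDiffOn
    have hsum : taylorWithinEval Real.exp (2 * M) (Set.uIcc 0 x) 0 x =
        ∑ j ∈ range (2 * M + 1), x ^ j / (j.factorial : ℝ) := by
      rw [taylor_within_apply]
      refine sum_congr rfl fun j _ => ?_
      rw [iteratedDerivWithin_eq_iteratedDeriv (uniqueDiffOn_uIcc hx.ne')
        Real.contDiff_exp.contDiffAt Set.left_mem_uIcc, iteratedDeriv_eq_iterate,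
        Real.iter_deriv_exp, Real.exp_zero, sub_zero, smul_eq_mul, mul_one, inv_mul_eq_div]
    have hrem : iteratedDeriv (2 * M + 1) Real.exp ξ * (x - 0) ^ (2 * M + 1) /
        ((2 * M + 1).factorial : ℝ) ≤ 0 := by
      rw [iteratedDeriv_eq_iterate, Real.iter_deriv_exp, sub_zero]
      have hpow : x ^ (2 * M + 1) ≤ 0 := (Odd.pow_neg ⟨M, rfl⟩ hx).le
      exact div_nonpos_of_nonpos_of_nonneg
        (mul_nonpos_of_nonneg_of_nonpos (Real.exp_pos ξ).le hpow) (Nat.cast_nonneg _)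
    rw [← hsum]
    linarith [Real.exp_pos x]

/-- The partial sums over `2M + 1` terms are values of the functional at the even Taylor sections of
`t ↦ exp (x * t)`, which are positive polynomials. -/
lemma IsStieltjesPositive.nonneg_of_hasSum_pow_div_factorial_mul (hμ : IsStieltjesPositive μ)
    {x a : ℝ} (h : HasSum (fun j : ℕ => x ^ j / (j.factorial : ℝ) * μ j) a) : 0 ≤ a := by
  have hsub : Filter.Tendsto (fun M : ℕ => 2 * M + 1) Filter.atTop Filter.atTop :=
    Filter.tendsto_atTop_mono (fun M => by simp only [id_eq]; omega) Filter.tendsto_id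
  refine ge_of_tendsto' (h.tendsto_sum_nat.comp hsub) fun M => ?_
  have hM := hμ (∑ j ∈ range (2 * M + 1), monomial j (x ^ j / (j.factorial : ℝ))) fun t _ => ?_
  · simpa only [map_sum, momentFunctional_monomial] using! hM
  · simpa only [eval_finsetSum, eval_monomial, div_mul_eq_mul_div, ← mul_pow] using
      (sum_range_odd_pow_div_factorial_pos M (x * t)).le

lemma integrableOn_exp_neg_mul_polynomial_eval (p : ℝ[X]) :
    IntegrableOn (fun t => Real.exp (-t) * p.eval t) (Set.Ioi 0) := by
  induction p using Polynomial.induction_on' with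
  | add p q hp hq =>
    simp only [eval_add, mul_add]
    exact hp.add hq
  | monomial n a =>
    have h := (Real.GammaIntegral_convergent (s := n + 1) (by positivity)).const_mul a
    simpa only [add_sub_cancel_right, Real.rpow_natCast, eval_monomial, mul_left_comm a] using! h

lemma momentFunctional_factorial (p : ℝ[X]) :
    momentFunctional (fun n => (n.factorial : ℝ)) p =
      ∫ t in Set.Ioi (0 : ℝ), Real.exp (-t) * p.eval t := by
  induction p using Polynomial.induction_on' with
  | add p q hp hq =>
    simp only [map_add, hp, hq, eval_add, mul_add]
    exact (integral_add (integrableOn_exp_neg_mul_polynomial_eval p)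
      (integrableOn_exp_neg_mul_polynomial_eval q)).symm
  | monomial n a =>
    simp only [momentFunctional_monomial, eval_monomial, mul_left_comm _ a, integral_const_mul]
    rw [← Real.Gamma_nat_eq_factorial, Real.Gamma_eq_integral (by positivity)]
    simp only [add_sub_cancel_right, Real.rpow_natCast]

lemma isStieltjesPositive_factorial : IsStieltjesPositive fun n => (n.factorial : ℝ) := by
  intro p hp
  rw [momentFunctional_factorial]
  exact setIntegral_nonneg measurableSet_Ioi fun t ht =>
    mul_nonneg (Real.exp_pos _).le (hp t (le_of_lt ht))

/-- The identity `(n+k)! (βn+s) = β (n+k+1)! + (s-β(k+1)) (n+k)!`, both of whose coefficients are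
nonnegative, absorbs the factors of the rising factorial one at a time. -/
lemma isStieltjesPositive_factorial_mul_ascPochhammer {β : ℝ} (hβ0 : 0 ≤ β) (hβ1 : β ≤ 1) (N : ℕ) :
    ∀ (k : ℕ) {s : ℝ}, β * (k + 1) ≤ s →
      IsStieltjesPositive fun n =>
        ((n + k).factorial : ℝ) * (ascPochhammer ℝ N).eval (β * n + s) := by
  induction N with
  | zero => intro k s _; simpa using isStieltjesPositive_factorial.shift k
  | succ N ih =>
    intro k s hs
    have hraise := (ih (k + 1) (s := s + 1) (by push_cast; linarith)).const_mul hβ0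
    have hkeep := (ih k (s := s + 1) (by linarith)).const_mul (sub_nonneg.2 hs)
    convert! hraise.add hkeep using 2 with n
    rw [ascPochhammer_succ_left, eval_mul, eval_X, eval_comp, eval_add, eval_X, eval_one,
      ← add_assoc n, Nat.factorial_succ]
    push_cast
    ring_nf

lemma eval_ascPochhammer_eq_prod_range {R : Type*} [CommSemiring R] (N : ℕ) (x : R) :
    (ascPochhammer R N).eval x = ∏ j ∈ range N, (x + j) := by
  induction N with
  | zero => rw [ascPochhammer_zero, eval_one, prod_range_zero]
  | succ N ih => rw [ascPochhammer_succ_eval, ih, prod_range_succ]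

/-- By Euler's limit formula `1 / Γ(βn+1)` is a limit of rising factorials of `βn+1`. -/
lemma isStieltjesPositive_factorial_div_Gamma {β : ℝ} (hβ0 : 0 ≤ β) (hβ1 : β ≤ 1) :
    IsStieltjesPositive fun n => (n.factorial : ℝ) / Real.Gamma (β * n + 1) := by
  refine IsStieltjesPositive.of_tendsto (l := Filter.atTop)
    (f := fun N n => (n.factorial : ℝ) / Real.GammaSeq (β * n + 1) N) (fun N => ?_) fun n =>
      tendsto_const_nhds.div (Real.GammaSeq_tendsto_Gamma _)
        (Real.Gamma_pos_of_pos (by positivity)).ne'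
  have h := ((isStieltjesPositive_factorial_mul_ascPochhammer hβ0 hβ1 (N + 1) 0
    (s := 1) (by simpa using hβ1)).pow_mul (r := ((N : ℝ) ^ β)⁻¹) (by positivity)).const_mul
    (c := ((N : ℝ) * N.factorial)⁻¹) (by positivity)
  convert! h using 2 with n
  have hpow : (N : ℝ) ^ (β * n + 1) = ((N : ℝ) ^ β) ^ n * N := by
    rw [Real.rpow_add_one' N.cast_nonneg (by positivity), Real.rpow_mul N.cast_nonneg,
      Real.rpow_natCast]
  rw [Real.GammaSeq, hpow, eval_ascPochhammer_eq_prod_range, add_zero, div_div_eq_mul_div,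
    div_eq_mul_inv]
  simp only [mul_inv, inv_pow]
  ring

end Stieltjes

section MittagLeffler

lemma rpow_mul_exp_neg_le_Gamma_add_one {R s : ℝ} (hR : 0 ≤ R) (hs : 0 ≤ s) :
    R ^ s * Real.exp (-R) ≤ Real.Gamma (s + 1) := by
  have hint : IntegrableOn (fun x => Real.exp (-x) * x ^ s) (Set.Ioi 0) := by
    simpa using Real.GammaIntegral_convergent (s := s + 1) (by linarith)
  calc R ^ s * Real.exp (-R) = ∫ x in Set.Ioi R, R ^ s * Real.exp (-x) := by
        rw [integral_const_mul, integral_exp_neg_Ioi]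
    _ ≤ ∫ x in Set.Ioi R, Real.exp (-x) * x ^ s := by
        refine setIntegral_mono_on ((integrableOn_exp_neg_Ioi R).const_mul _)
          (hint.mono_set (Set.Ioi_subset_Ioi hR)) measurableSet_Ioi fun x (hx : R < x) => ?_
        rw [mul_comm]
        gcongr
    _ ≤ ∫ x in Set.Ioi 0, Real.exp (-x) * x ^ s := by
        refine setIntegral_mono_set hint ?_ (Set.Ioi_subset_Ioi hR).eventuallyLE
        filter_upwards [ae_restrict_mem measurableSet_Ioi] with x (hx : 0 < x)
        positivity
    _ = Real.Gamma (s + 1) := by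
        rw [Real.Gamma_eq_integral (by linarith), add_sub_cancel_right]

/-- `R` is chosen so that the lower bound `R ^ (βn) * exp (-R)` for `Γ(βn+1)` yields a geometric
majorant of ratio `1/2`. -/
lemma summable_pow_div_Gamma {β r : ℝ} (hβ : 0 < β) (hr : 0 ≤ r) :
    Summable fun n : ℕ => r ^ n / Real.Gamma (β * n + 1) := by
  set R : ℝ := (2 * r + 1) ^ β⁻¹ with hR
  have hRpow (n : ℕ) : R ^ (β * n) = (2 * r + 1) ^ n := by
    rw [hR, ← Real.rpow_mul (by positivity), inv_mul_cancel_left₀ hβ.ne', Real.rpow_natCast]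
  refine Summable.of_nonneg_of_le (f := fun n : ℕ => Real.exp R * (1 / 2) ^ n) (fun n => ?_)
    (fun n => ?_) (summable_geometric_two.mul_left _)
  · exact div_nonneg (pow_nonneg hr n) (Real.Gamma_pos_of_pos (by positivity)).le
  · rw [div_le_iff₀ (Real.Gamma_pos_of_pos (by positivity))]
    calc r ^ n ≤ ((2 * r + 1) / 2) ^ n := by gcongr; linarith
      _ = Real.exp R * (1 / 2) ^ n * (R ^ (β * n) * Real.exp (-R)) := by
        rw [hRpow, Real.exp_neg, div_pow, one_div, inv_pow]
        field_simp
      _ ≤ _ := by gcongr; exact rpow_mul_exp_neg_le_Gamma_add_one (by positivity) (by positivity)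

variable {β : ℝ}

lemma hasFPowerSeriesOnBall_mittagLeffler (hβ : 0 < β) :
    HasFPowerSeriesOnBall (mittagLeffler β) (FormalMultilinearSeries.ofScalars ℂ
      fun n : ℕ => (Complex.Gamma ((β * n + 1 : ℝ) : ℂ))⁻¹) 0 ⊤ := by
  set p := FormalMultilinearSeries.ofScalars ℂ
    fun n : ℕ => (Complex.Gamma ((β * n + 1 : ℝ) : ℂ))⁻¹ with hp
  have hrad : p.radius = ⊤ := by
    refine p.radius_eq_top_of_summable_norm fun r => ?_
    refine (summable_pow_div_Gamma hβ r.coe_nonneg).congr fun n => ?_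
    have hΓ : 0 < Real.Gamma (β * n + 1) := Real.Gamma_pos_of_pos (by positivity)
    rw [hp, FormalMultilinearSeries.ofScalars_norm, Complex.Gamma_ofReal, norm_inv,
      Complex.norm_real, Real.norm_of_nonneg hΓ.le, div_eq_inv_mul]
  have hsum : p.sum = mittagLeffler β := by
    ext z
    exact tsum_congr fun n => by
      rw [hp, FormalMultilinearSeries.ofScalars_apply_eq, smul_eq_mul, inv_mul_eq_div]
  simpa only [hrad, hsum] using p.hasFPowerSeriesOnBall (hrad ▸ ENNReal.zero_lt_top)

lemma differentiable_mittagLeffler (hβ : 0 < β) : Differentiable ℂ (mittagLeffler β) := by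
  simpa [← differentiableOn_univ] using (hasFPowerSeriesOnBall_mittagLeffler hβ).differentiableOn

lemma iteratedDeriv_mittagLeffler_zero (hβ : 0 < β) (n : ℕ) :
    iteratedDeriv n (mittagLeffler β) 0 = ((n.factorial / Real.Gamma (β * n + 1) : ℝ) : ℂ) := by
  have h := (hasFPowerSeriesOnBall_mittagLeffler hβ).factorial_smul 1 n
  rw [iteratedDeriv_eq_iteratedFDeriv, ← h, FormalMultilinearSeries.ofScalars_apply_eq,
    Complex.Gamma_ofReal, one_pow, smul_eq_mul, mul_one, nsmul_eq_mul]
  push_cast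
  rw [div_eq_mul_inv]

lemma iteratedDeriv_ofReal_of_differentiable {f : ℂ → ℂ} {g : ℝ → ℝ} (hf : Differentiable ℂ f)
    (hfg : ∀ x : ℝ, f x = g x) (k : ℕ) (x : ℝ) :
    iteratedDeriv k f x = (iteratedDeriv k g x : ℝ) := by
  induction k generalizing x with
  | zero => exact hfg x
  | succ k ih =>
    have hd : HasDerivAt (iteratedDeriv k f) (iteratedDeriv (k + 1) f x) (x : ℂ) := by
      rw [iteratedDeriv_succ]
      exact (hf.contDiff.differentiable_iteratedDeriv k (WithTop.coe_lt_top _) _).hasDerivAt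
    have hre : HasDerivAt (iteratedDeriv k g) (iteratedDeriv (k + 1) f x).re x := by
      simpa only [ih, Complex.ofReal_re] using hd.real_of_complex
    have hcomplex : HasDerivAt (fun y : ℝ => ((iteratedDeriv k g y : ℝ) : ℂ))
        (iteratedDeriv (k + 1) f x) x := by
      simpa only [ih] using hd.comp_ofReal
    rw [iteratedDeriv_succ (f := g), hre.deriv]
    exact hcomplex.unique hre.ofReal_comp

lemma mittagLeffler_ofReal (β x : ℝ) : mittagLeffler β x = (mittagLefflerR β x : ℂ) := by
  rw [mittagLeffler, mittagLefflerR, Complex.ofReal_tsum]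
  exact tsum_congr fun n => by
    rw [Complex.Gamma_ofReal, Complex.ofReal_div, Complex.ofReal_pow]

lemma iteratedDeriv_mittagLeffler_ofReal (hβ : 0 < β) (k : ℕ) (x : ℝ) :
    iteratedDeriv k (mittagLeffler β) x = (iteratedDeriv k (mittagLefflerR β) x : ℝ) :=
  iteratedDeriv_ofReal_of_differentiable (differentiable_mittagLeffler hβ)
    (mittagLeffler_ofReal β) k x

lemma hasSum_taylorSeries_iteratedDeriv_of_entire {f : ℂ → ℂ} (hf : Differentiable ℂ f) (k : ℕ)
    (c z : ℂ) :
    HasSum (fun j : ℕ => (z - c) ^ j / (j.factorial : ℂ) * iteratedDeriv (j + k) f c)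
      (iteratedDeriv k f z) := by
  have hk : Differentiable ℂ (iteratedDeriv k f) :=
    hf.contDiff.differentiable_iteratedDeriv k (WithTop.coe_lt_top _)
  convert! Complex.hasSum_taylorSeries_of_entire hk c z using 2 with j
  rw [iteratedDeriv_eq_iterate (f := iteratedDeriv k f), iteratedDeriv_eq_iterate (f := f),
    iteratedDeriv_eq_iterate, ← Function.iterate_add_apply, smul_eq_mul, smul_eq_mul, ← mul_assoc,
    inv_mul_eq_div]

lemma hasSum_iteratedDeriv_mittagLefflerR (hβ : 0 < β) (k : ℕ) (x : ℝ) :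
    HasSum (fun j : ℕ => x ^ j / (j.factorial : ℝ) *
        ((j + k).factorial / Real.Gamma (β * (j + k : ℕ) + 1)))
      (iteratedDeriv k (mittagLefflerR β) x) := by
  rw [← Complex.hasSum_ofReal, ← iteratedDeriv_mittagLeffler_ofReal hβ]
  convert! hasSum_taylorSeries_iteratedDeriv_of_entire (differentiable_mittagLeffler hβ) k 0 x
    using 2 with j
  rw [iteratedDeriv_mittagLeffler_zero hβ, sub_zero]
  push_cast
  rfl

/-- In particular `x ↦ E_β(-x)` is completely monotone. -/
lemma iteratedDeriv_mittagLefflerR_nonneg (hβ0 : 0 < β) (hβ1 : β ≤ 1) (k : ℕ) (x : ℝ) :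
    0 ≤ iteratedDeriv k (mittagLefflerR β) x :=
  have hpos := (isStieltjesPositive_factorial_div_Gamma hβ0.le hβ1).shift k
  hpos.nonneg_of_hasSum_pow_div_factorial_mul (hasSum_iteratedDeriv_mittagLefflerR hβ0 k x)

lemma mittagLeffler_zero (hβ : 0 < β) : mittagLeffler β 0 = 1 := by
  simpa using iteratedDeriv_mittagLeffler_zero hβ 0

end MittagLeffler

section FracPoisson

/-- The mass `(λᵏ/k!) E_β⁽ᵏ⁾(-λ)` of the fractional Poisson measure at `k`, as a real number, that
is, before the truncation at zero by `ENNReal.ofReal` in `fracPoisson`. -/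
def fracPoissonWeight (lam β : ℝ) (k : ℕ) : ℝ :=
  lam ^ k / k.factorial * iteratedDeriv k (mittagLefflerR β) (-lam)

variable {lam β : ℝ}

lemma fracPoissonWeight_nonneg (hlam : 0 ≤ lam) (hβ0 : 0 < β) (hβ1 : β ≤ 1) (k : ℕ) :
    0 ≤ fracPoissonWeight lam β k :=
  mul_nonneg (by positivity) (iteratedDeriv_mittagLefflerR_nonneg hβ0 hβ1 k (-lam))

lemma integral_fracPoisson {E : Type*} [NormedAddCommGroup E] [NormedSpace ℝ E]
    [FiniteDimensional ℝ E] (hlam : 0 ≤ lam) (hβ0 : 0 < β) (hβ1 : β ≤ 1) (f : ℝ → E) :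
    ∫ x, f x ∂(fracPoisson lam β) = ∑' k : ℕ, fracPoissonWeight lam β k • f k := by
  rw [fracPoisson, integral_sum_dirac fun k => ENNReal.ofReal_ne_top]
  exact tsum_congr fun k => by
    rw [← fracPoissonWeight, ENNReal.toReal_ofReal (fracPoissonWeight_nonneg hlam hβ0 hβ1 k)]

/-- The masses are the Taylor coefficients of `z ↦ E_β(λz)` at `-1`; formally, their generating
function `∑ w_k (1 + z)ᵏ` is therefore `E_β(λz)`. -/
lemma ofReal_fracPoissonWeight (hβ : 0 < β) (lam : ℝ) (k : ℕ) :
    (fracPoissonWeight lam β k : ℂ) =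
      iteratedDeriv k (fun z : ℂ => mittagLeffler β (lam * z)) (-1) / k.factorial := by
  rw [iteratedDeriv_comp_const_mul (differentiable_mittagLeffler hβ).contDiff]
  dsimp only
  rw [mul_neg_one, ← Complex.ofReal_neg, iteratedDeriv_mittagLeffler_ofReal hβ, fracPoissonWeight]
  push_cast
  ring

end FracPoisson

section GeneratingFunction

lemma iteratedDeriv_one_add_pow {𝕜 : Type*} [NontriviallyNormedField 𝕜] (j k : ℕ) :
    iteratedDeriv j (fun z : 𝕜 => (1 + z) ^ k) 0 = (k.descFactorial j : 𝕜) := by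
  rw [iteratedDeriv_comp_const_add j (fun z : 𝕜 => z ^ k) 1]
  simp

lemma hasSum_iteratedDeriv_mul_descFactorial {f : ℂ → ℂ} (hf : Differentiable ℂ f) (j : ℕ) (c : ℂ) :
    HasSum (fun k : ℕ => iteratedDeriv k f c / k.factorial * (k.descFactorial j : ℂ))
      (iteratedDeriv j f (c + 1)) := by
  have hsmall : ∑ k ∈ range j, iteratedDeriv k f c / k.factorial * (k.descFactorial j : ℂ) = 0 :=
    sum_eq_zero fun k hk => by
      rw [Nat.descFactorial_of_lt (mem_range.1 hk), Nat.cast_zero, mul_zero]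
  rw [← hasSum_nat_add_iff' j, hsmall, sub_zero]
  convert! hasSum_taylorSeries_iteratedDeriv_of_entire hf j c (c + 1) using 2 with i
  have hfact : (i.factorial : ℂ) * ((i + j).descFactorial j : ℂ) = (i + j).factorial := by
    exact_mod_cast Nat.add_sub_cancel i j ▸ Nat.factorial_mul_descFactorial (Nat.le_add_left j i)
  have hi : (i.factorial : ℂ) ≠ 0 := Nat.cast_ne_zero.2 i.factorial_ne_zero
  have hij : ((i + j).factorial : ℂ) ≠ 0 := Nat.cast_ne_zero.2 (i + j).factorial_ne_zero
  rw [add_sub_cancel_left, one_pow, div_mul_eq_mul_div, div_mul_eq_mul_div, one_mul,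
    div_eq_div_iff hij hi, ← hfact]
  ring

/-- Substituting `∑ f⁽ᵏ⁾(-1)/k! (1 + z)ᵏ = f(z)` under the derivative at `0`. -/
lemma hasSum_iteratedDeriv_one_add_pow_mul {f h : ℂ → ℂ} {n : ℕ} (hf : Differentiable ℂ f)
    (hh : ContDiffAt ℂ n h 0) :
    HasSum (fun k : ℕ => iteratedDeriv k f (-1) / k.factorial *
        iteratedDeriv n (fun z => (1 + z) ^ k * h z) 0)
      (iteratedDeriv n (fun z => f z * h z) 0) := by
  have hpow (k : ℕ) : iteratedDeriv n (fun z => (1 + z) ^ k * h z) 0 =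
      ∑ j ∈ range (n + 1), n.choose j * (k.descFactorial j : ℂ) * iteratedDeriv (n - j) h 0 := by
    rw [iteratedDeriv_fun_mul (by fun_prop) hh]
    simp only [iteratedDeriv_one_add_pow]
  rw [iteratedDeriv_fun_mul hf.contDiff.contDiffAt hh]
  simp only [hpow, mul_sum]
  refine hasSum_sum fun j _ => ?_
  have hj := (hasSum_iteratedDeriv_mul_descFactorial hf j (-1)).mul_left (n.choose j : ℂ)
  rw [neg_add_cancel] at hj
  convert! hj.mul_right (iteratedDeriv (n - j) h 0) using 2 with k
  ring

lemma eventually_exp_log_one_add :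
    ∀ᶠ z : ℂ in nhds 0, Complex.exp (Complex.log (1 + z)) = 1 + z := by
  have hne : ∀ᶠ z : ℂ in nhds 0, 1 + z ≠ 0 :=
    (continuous_const.add continuous_id).continuousAt.eventually_ne (by simp)
  exact hne.mono fun z => Complex.exp_log

lemma contDiffAt_exp_mul_log_one_add (x : ℂ) (n : WithTop ℕ∞) :
    ContDiffAt ℂ n (fun z => Complex.exp (x * Complex.log (1 + z))) 0 := by
  have hlog : ContDiffAt ℂ n (fun z => Complex.log (1 + z)) 0 :=
    ContDiffAt.comp (0 : ℂ) (Complex.contDiffAt_log (by simp [Complex.one_mem_slitPlane]))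
      (contDiffAt_const.add contDiffAt_id)
  exact (contDiffAt_const.mul hlog).cexp

variable {h : ℂ → ℂ} {n : ℕ}

/-- The identity `e^{(t+1) log(1+z)} - e^{t log(1+z)} = z e^{t log(1+z)}` of generating
functions. -/
lemma fwdDiff_iteratedDeriv_exp_mul_log_one_add (hh : ContDiffAt ℂ n h 0) :
    (fwdDiff (1 : ℝ) fun t : ℝ =>
        iteratedDeriv n (fun z => Complex.exp (t * Complex.log (1 + z)) * h z) 0) =
      fun t : ℝ =>
        iteratedDeriv n (fun z => Complex.exp (t * Complex.log (1 + z)) * (z * h z)) 0 := by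
  ext t
  rw [fwdDiff, ← iteratedDeriv_fun_sub ((contDiffAt_exp_mul_log_one_add _ _).mul hh)
    ((contDiffAt_exp_mul_log_one_add _ _).mul hh)]
  refine Filter.EventuallyEq.iteratedDeriv_eq n ?_
  filter_upwards [eventually_exp_log_one_add] with z hz
  rw [Complex.ofReal_add, Complex.ofReal_one, add_mul, one_mul, Complex.exp_add, hz]
  ring

lemma fwdDiff_iterate_iteratedDeriv_exp_mul_log_one_add (hh : ContDiffAt ℂ n h 0) (m : ℕ) :
    ((fwdDiff (1 : ℝ))^[m] fun t : ℝ =>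
        iteratedDeriv n (fun z => Complex.exp (t * Complex.log (1 + z)) * h z) 0) =
      fun t : ℝ =>
        iteratedDeriv n (fun z => Complex.exp (t * Complex.log (1 + z)) * (z ^ m * h z)) 0 := by
  induction m generalizing h with
  | zero => simp only [Function.iterate_zero_apply, pow_zero, one_mul]
  | succ m ih =>
    rw [Function.iterate_succ_apply, fwdDiff_iteratedDeriv_exp_mul_log_one_add hh,
      ih (contDiffAt_fun_id.mul hh)]
    simp only [pow_succ, mul_assoc]

lemma iteratedDeriv_exp_natCast_mul_log_one_add (h : ℂ → ℂ) (n k : ℕ) :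
    iteratedDeriv n (fun z => Complex.exp (k * Complex.log (1 + z)) * h z) 0 =
      iteratedDeriv n (fun z => (1 + z) ^ k * h z) 0 := by
  refine Filter.EventuallyEq.iteratedDeriv_eq n ?_
  filter_upwards [eventually_exp_log_one_add] with z hz
  rw [Complex.exp_nat_mul, hz]

end GeneratingFunction

section GenAppell

variable {β : ℝ}

lemma eventually_mittagLeffler_mul_ne_zero (hβ : 0 < β) (c : ℂ) :
    ∀ᶠ z in nhds 0, mittagLeffler β (c * z) ≠ 0 := by
  refine ((differentiable_mittagLeffler hβ).continuous.comp
    (continuous_const_mul c)).continuousAt.eventually_ne ?_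
  simp [mittagLeffler_zero hβ]

lemma contDiffAt_inv_mittagLeffler_mul (hβ : 0 < β) (c : ℂ) (n : WithTop ℕ∞) :
    ContDiffAt ℂ n (fun z => (mittagLeffler β (c * z))⁻¹) 0 :=
  ((differentiable_mittagLeffler hβ).contDiff.comp
    (contDiff_const.mul contDiff_id)).contDiffAt.inv
    (eventually_mittagLeffler_mul_ne_zero hβ c).self_of_nhds

lemma fwdDiff_iterate_genAppell_natCast (hβ : 0 < β) (lam : ℝ) (n m k : ℕ) :
    ((fwdDiff (1 : ℝ))^[m] fun t : ℝ => genAppell lam β n t) k =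
      iteratedDeriv n (fun z => (1 + z) ^ k * (z ^ m * (mittagLeffler β (lam * z))⁻¹)) 0 := by
  simp only [genAppell, div_eq_mul_inv]
  rw [fwdDiff_iterate_iteratedDeriv_exp_mul_log_one_add
      (contDiffAt_inv_mittagLeffler_mul hβ lam n) m]
  dsimp only
  rw [Complex.ofReal_natCast, iteratedDeriv_exp_natCast_mul_log_one_add]

end GenAppell

theorem stmt11 (lam β : ℝ) (hlam : 0 < lam) (hβ0 : 0 < β) (hβ1 : β ≤ 1) (n m : ℕ) :
    (∫ x : ℝ, ((fwdDiff (1 : ℝ))^[m] fun t : ℝ => genAppell lam β n t) x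
        ∂(fracPoisson lam β)) =
      (n.factorial : ℂ) * (if n = m then 1 else 0) := by
  set F : ℂ → ℂ := fun z => mittagLeffler β (lam * z)
  have hFd : Differentiable ℂ F :=
    (differentiable_mittagLeffler hβ0).comp (differentiable_id.const_mul _)
  have hquot : ContDiffAt ℂ n (fun z => z ^ m * (F z)⁻¹) 0 :=
    (contDiffAt_id.pow m).mul (contDiffAt_inv_mittagLeffler_mul hβ0 lam n)
  have hcancel : (fun z => F z * (z ^ m * (F z)⁻¹)) =ᶠ[nhds 0] fun z => z ^ m := by
    filter_upwards [eventually_mittagLeffler_mul_ne_zero hβ0 lam] with z hz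
    rw [mul_left_comm, mul_inv_cancel₀ hz, mul_one]
  rw [integral_fracPoisson hlam.le hβ0 hβ1]
  calc ∑' k : ℕ, fracPoissonWeight lam β k •
        ((fwdDiff (1 : ℝ))^[m] fun t : ℝ => genAppell lam β n t) k
      = ∑' k : ℕ, iteratedDeriv k F (-1) / k.factorial *
          iteratedDeriv n (fun z => (1 + z) ^ k * (z ^ m * (F z)⁻¹)) 0 :=
        tsum_congr fun k => by
          rw [fwdDiff_iterate_genAppell_natCast hβ0, Complex.real_smul,
            ofReal_fracPoissonWeight hβ0]
    _ = iteratedDeriv n (fun z => F z * (z ^ m * (F z)⁻¹)) 0 :=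
        (hasSum_iteratedDeriv_one_add_pow_mul hFd hquot).tsum_eq
    _ = iteratedDeriv n (fun z => z ^ m) 0 := hcancel.iteratedDeriv_eq n
    _ = n.factorial * (if n = m then 1 else 0) := by
        rw [iteratedDeriv_fun_pow_zero, mul_ite, mul_one, mul_zero]
        split_ifs with hnm <;> simp [hnm]
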